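/- arXiv:2310.20703 — 7 statements merged into one kernel-verified Lean document; each statement's English description precedes it below -/
import Mathlib

section
/- Let p and q be strictly positive probability mass functions on a nonempty finite set Y^L of sequences of length L over a finite alphabet Y (L ≥ 1). For each l ∈ {1,…,L} and prefix w ∈ Y^{l−1}, let q(w) denote the marginal probability of the prefix w under q, and let q(·|w) and p(·|w) denote the conditional distributions of the l-th coordinate given the prefix w under q and p respectively. Then for every l ∈ {1,…,L}: Σ_{w ∈ Y^{l−1}} q(w) · Σ_{a ∈ Y} |q(a|w) − p(a|w)| ≤ 4 · TV(p, q). -/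
open scoped BigOperators

noncomputable section

/-- Total variation distance between two distributions on a finite set. -/
def tv {S : Type*} [Fintype S] (p q : S → ℝ) : ℝ :=
  (1 / 2) * ∑ s : S, |p s - q s|

/-- Marginal probability of the length-`l.1` prefix `w` under a distribution `μ` on `Y^L`. -/
def prefixMarginal {Y : Type*} [Fintype Y] [DecidableEq Y] {L : ℕ}
    (μ : (Fin L → Y) → ℝ) (l : Fin L) (w : Fin l.1 → Y) : ℝ :=
  ∑ y : Fin L → Y, if ∀ i : Fin l.1, y ⟨i.1, i.2.trans l.2⟩ = w i then μ y else 0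

/-- Conditional probability, under a distribution `μ` on `Y^L`, that the `l`-th coordinate
equals `a` given that the length-`l.1` prefix equals `w`. -/
def condProb {Y : Type*} [Fintype Y] [DecidableEq Y] {L : ℕ}
    (μ : (Fin L → Y) → ℝ) (l : Fin L) (w : Fin l.1 → Y) (a : Y) : ℝ :=
  (∑ y : Fin L → Y,
      if (∀ i : Fin l.1, y ⟨i.1, i.2.trans l.2⟩ = w i) ∧ y l = a then μ y else 0) /
    prefixMarginal μ l w

/-- Joint probability of the prefix `w` and next coordinate `a`. -/
def jointP {Y : Type*} [Fintype Y] [DecidableEq Y] {L : ℕ}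
    (μ : (Fin L → Y) → ℝ) (l : Fin L) (w : Fin l.1 → Y) (a : Y) : ℝ :=
  ∑ y : Fin L → Y,
      if (∀ i : Fin l.1, y ⟨i.1, i.2.trans l.2⟩ = w i) ∧ y l = a then μ y else 0

theorem sum_jointP {Y : Type*} [Fintype Y] [DecidableEq Y] {L : ℕ}
    (μ : (Fin L → Y) → ℝ) (l : Fin L) (w : Fin l.1 → Y) :
    ∑ a, jointP μ l w a = prefixMarginal μ l w := by
  unfold jointP prefixMarginal
  rw [Finset.sum_comm]
  refine Finset.sum_congr rfl fun y _ => ?_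
  simp [ite_and]

theorem sum_prefixMarginal {Y : Type*} [Fintype Y] [DecidableEq Y] {L : ℕ}
    (μ : (Fin L → Y) → ℝ) (l : Fin L) :
    ∑ w, prefixMarginal μ l w = ∑ y, μ y := by
  unfold prefixMarginal
  rw [Finset.sum_comm]
  refine Finset.sum_congr rfl fun y _ => ?_
  simp [← funext_iff]

theorem prefixMarginal_pos {Y : Type*} [Fintype Y] [Nonempty Y] [DecidableEq Y] {L : ℕ}
    (μ : (Fin L → Y) → ℝ) (h : ∀ y, 0 < μ y) (l : Fin L) (w : Fin l.1 → Y) :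
    0 < prefixMarginal μ l w := by
  unfold prefixMarginal
  refine Finset.sum_pos' (fun y _ => ?_)
    ⟨fun j => if hj : j.1 < l.1 then w ⟨j.1, hj⟩ else Classical.arbitrary Y,
      Finset.mem_univ _, ?_⟩
  · split_ifs
    exacts [(h y).le, le_rfl]
  · simp [h]

theorem jointP_abs {Y : Type*} [Fintype Y] [DecidableEq Y] {L : ℕ}
    (p q : (Fin L → Y) → ℝ) (l : Fin L) (w : Fin l.1 → Y) (a : Y) :
    |jointP q l w a - jointP p l w a| ≤ jointP (fun y => |p y - q y|) l w a := by
  unfold jointP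
  rw [← Finset.sum_sub_distrib]
  refine (Finset.abs_sum_le_sum_abs _ _).trans (Finset.sum_le_sum fun y _ => ?_)
  split_ifs
  · rw [abs_sub_comm]
  · simp

theorem key_pointwise (Q P a b : ℝ) (hQ : 0 < Q) (hP : 0 < P) (hb : 0 ≤ b) :
    Q * |a / Q - b / P| ≤ |a - b| + b * (|P - Q| / P) := by
  have e : Q * |a / Q - b / P| = |(a - b) + b * ((P - Q) / P)| := by
    rw [← abs_of_pos hQ, ← abs_mul, abs_of_pos hQ]
    congr 1
    field_simp
    ring
  rw [e]
  refine (abs_add_le _ _).trans ?_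
  rw [abs_mul, abs_div, abs_of_nonneg hb, abs_of_pos hP]

/-- the expected (under `q`-prefixes) total variation between the conditional
next-coordinate distributions of `q` and `p` is at most `4 TV(p, q)`. -/
theorem conditional_tv_le_four_tv
    {Y : Type*} [Fintype Y] [Nonempty Y] [DecidableEq Y] {L : ℕ} (hL : 0 < L)
    (p q : (Fin L → Y) → ℝ)
    (hp : ∀ y, 0 < p y) (hq : ∀ y, 0 < q y)
    (hpsum : ∑ y : Fin L → Y, p y = 1) (hqsum : ∑ y : Fin L → Y, q y = 1)
    (l : Fin L) :
    ∑ w : Fin l.1 → Y, prefixMarginal q l w *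
        ∑ a : Y, |condProb q l w a - condProb p l w a| ≤
      4 * tv p q := by
  have hw : ∀ w : Fin l.1 → Y, prefixMarginal q l w *
        ∑ a : Y, |condProb q l w a - condProb p l w a| ≤
      2 * prefixMarginal (fun y => |p y - q y|) l w := by
    intro w
    have hQ := prefixMarginal_pos q hq l w
    have hP := prefixMarginal_pos p hp l w
    have hJ : ∀ a, 0 ≤ jointP p l w a := fun a => by
      unfold jointP
      refine Finset.sum_nonneg fun y _ => ?_
      split_ifs
      exacts [(hp y).le, le_rfl]
    have h1 : prefixMarginal q l w * ∑ a : Y, |condProb q l w a - condProb p l w a| ≤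
        ∑ a, (|jointP q l w a - jointP p l w a| + jointP p l w a *
          (|prefixMarginal p l w - prefixMarginal q l w| / prefixMarginal p l w)) := by
      rw [Finset.mul_sum]
      exact Finset.sum_le_sum fun a _ => key_pointwise _ _ _ _ hQ hP (hJ a)
    rw [Finset.sum_add_distrib, ← Finset.sum_mul, sum_jointP, mul_div_cancel₀ _ hP.ne'] at h1
    have h2 : ∑ a, |jointP q l w a - jointP p l w a| ≤
        prefixMarginal (fun y => |p y - q y|) l w := by
      rw [← sum_jointP]
      exact Finset.sum_le_sum fun a _ => jointP_abs p q l w a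
    have h3 : |prefixMarginal p l w - prefixMarginal q l w| ≤
        ∑ a, |jointP q l w a - jointP p l w a| := by
      rw [abs_sub_comm, ← sum_jointP, ← sum_jointP, ← Finset.sum_sub_distrib]
      exact Finset.abs_sum_le_sum_abs _ _
    linarith
  refine (Finset.sum_le_sum fun w _ => hw w).trans ?_
  rw [← Finset.mul_sum, sum_prefixMarginal]
  unfold tv
  linarith
end
end

section
/- Let K ≥ 2 be an integer, N > 0 a real number, and let μ : [0,∞) → ℝ be differentiable and satisfy the differential equation μ'(t) = 2K / ( N·( exp(μ(t)) + 2(K−1) + (K−1)²·exp(−μ(t)) ) ) for all t ≥ 0. Then for all t ≥ 0: (2K/N)·t + exp(μ(0)) + 2(K−1)·μ(0) − (K−1)²·exp(−μ(0)) = exp(μ(t)) + 2(K−1)·μ(t) − (K−1)²·exp(−μ(t)). -/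
/-- implicit solution of the reduced gradient-flow dynamics of the logit gap
under reinforcement finetuning of a linear softmax model. -/
theorem rft_gap_dynamics_implicit_solution
    (K : ℕ) (hK : 2 ≤ K) (N : ℝ) (hN : 0 < N) (μ : ℝ → ℝ)
    (hode : ∀ t : ℝ, 0 ≤ t →
      HasDerivAt μ
        (2 * (K : ℝ) / (N * (Real.exp (μ t) + 2 * ((K : ℝ) - 1) +
          ((K : ℝ) - 1) ^ 2 * Real.exp (-μ t)))) t)
    (t : ℝ) (ht : 0 ≤ t) :
    (2 * (K : ℝ) / N) * t + Real.exp (μ 0) + 2 * ((K : ℝ) - 1) * μ 0 -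
        ((K : ℝ) - 1) ^ 2 * Real.exp (-μ 0) =
      Real.exp (μ t) + 2 * ((K : ℝ) - 1) * μ t -
        ((K : ℝ) - 1) ^ 2 * Real.exp (-μ t) := by
  have hK' : (2 : ℝ) ≤ (K : ℝ) := by exact_mod_cast hK
  have hd : ∀ s : ℝ, 0 ≤ s → HasDerivAt (fun s => Real.exp (μ s) + 2 * ((K : ℝ) - 1) * μ s -
      ((K : ℝ) - 1) ^ 2 * Real.exp (-μ s) - (2 * (K : ℝ) / N) * s) 0 s := by
    intro s hs
    have h := hode s hs
    have h1 := (((h.exp).add (h.const_mul (2 * ((K : ℝ) - 1)))).sub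
      ((h.neg.exp).const_mul (((K : ℝ) - 1) ^ 2))).sub
      ((hasDerivAt_id s).const_mul (2 * (K : ℝ) / N))
    refine h1.congr_deriv ?_
    have hpos : 0 < Real.exp (μ s) + 2 * ((K : ℝ) - 1) +
        ((K : ℝ) - 1) ^ 2 * Real.exp (-μ s) := by
      have h2 : 0 < (K : ℝ) - 1 := by linarith
      positivity
    simp only [Pi.neg_apply]
    generalize Real.exp (-μ s) = b at *
    generalize Real.exp (μ s) = a at *
    have hne := hpos.ne'
    have hN' := hN.ne'
    have key : 2 * (K : ℝ) / (N * (a + 2 * ((K : ℝ) - 1) + ((K : ℝ) - 1) ^ 2 * b)) *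
        (a + 2 * ((K : ℝ) - 1) + ((K : ℝ) - 1) ^ 2 * b) = 2 * (K : ℝ) / N := by
      rw [← div_div, div_mul_cancel₀ _ hne]
    linear_combination key
  have hc := constant_of_has_deriv_right_zero (a := 0) (b := t)
    (fun s hs => (hd s hs.1).continuousAt.continuousWithinAt)
    (fun s hs => (hd s hs.1).hasDerivWithinAt) t ⟨ht, le_refl t⟩
  linarith
end

section
/- Let K ≥ 2 be an integer, N > 0 a real number, and let μ : [0,∞) → ℝ be differentiable and satisfy μ'(t) = 2K / ( N·( exp(μ(t)) + 2(K−1) + (K−1)²·exp(−μ(t)) ) ) for all t ≥ 0, with μ(0) < 0. If t* ≥ 0 satisfies μ(t*) = 0, then t* = (N(K−1)²/(2K))·exp(−μ(0)) − N(K−1)²/(2K) + (N/(2K))·(1 − exp(μ(0))) − (N(K−1)/K)·μ(0), and in particular t* ≥ (N(K−1)²/(2K))·( exp(−μ(0)) − 1 ). -/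
/-- exact formula and exponential lower bound for the first time at which
the logit gap crosses zero under the reduced reinforcement finetuning gradient-flow dynamics. -/
theorem rft_time_to_correct_classification
    (K : ℕ) (hK : 2 ≤ K) (N : ℝ) (hN : 0 < N) (μ : ℝ → ℝ)
    (hode : ∀ t : ℝ, 0 ≤ t →
      HasDerivAt μ
        (2 * (K : ℝ) / (N * (Real.exp (μ t) + 2 * ((K : ℝ) - 1) +
          ((K : ℝ) - 1) ^ 2 * Real.exp (-μ t)))) t)
    (hμ0 : μ 0 < 0)
    (tstar : ℝ) (htstar : 0 ≤ tstar) (hzero : μ tstar = 0) :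
    tstar =
        (N * ((K : ℝ) - 1) ^ 2 / (2 * K)) * Real.exp (-μ 0) -
          N * ((K : ℝ) - 1) ^ 2 / (2 * K) +
          (N / (2 * K)) * (1 - Real.exp (μ 0)) -
          (N * ((K : ℝ) - 1) / K) * μ 0 ∧
      tstar ≥ (N * ((K : ℝ) - 1) ^ 2 / (2 * K)) * (Real.exp (-μ 0) - 1) := by
  have hK1 : (1 : ℝ) ≤ (K : ℝ) - 1 := by
    have : (2 : ℝ) ≤ (K : ℝ) := by exact_mod_cast hK
    linarith
  have hKpos : (0 : ℝ) < (K : ℝ) := by linarith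
  have hder : ∀ t : ℝ, 0 ≤ t → HasDerivAt (fun s => Real.exp (μ s) + 2 * ((K : ℝ) - 1) * μ s -
      ((K : ℝ) - 1) ^ 2 * Real.exp (-μ s) - 2 * (K : ℝ) / N * s) 0 t := by
    intro t ht
    have h := hode t ht
    have hD : 0 < Real.exp (μ t) + 2 * ((K : ℝ) - 1) +
        ((K : ℝ) - 1) ^ 2 * Real.exp (-μ t) := by positivity
    have h2 := ((h.exp.add (h.const_mul (2 * ((K : ℝ) - 1)))).sub
      (h.neg.exp.const_mul (((K : ℝ) - 1) ^ 2))).sub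
      ((hasDerivAt_id t).const_mul (2 * (K : ℝ) / N))
    refine h2.congr_deriv ?_
    simp only [Pi.neg_apply]
    generalize Real.exp (μ t) = a at *
    generalize Real.exp (-μ t) = b at *
    have hD' := hD.ne'
    have hN' := hN.ne'
    generalize hd : a + 2 * ((K : ℝ) - 1) + ((K : ℝ) - 1) ^ 2 * b = D at *
    have : a = D - 2 * ((K : ℝ) - 1) - ((K : ℝ) - 1) ^ 2 * b := by linarith
    rw [this]
    field_simp
    ring
  have hc := constant_of_has_deriv_right_zero (a := 0) (b := tstar)
    (fun t ht => (hder t ht.1).continuousAt.continuousWithinAt)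
    (fun t ht => (hder t ht.1).hasDerivWithinAt) tstar ⟨htstar, le_refl _⟩
  simp only [hzero, neg_zero, Real.exp_zero, mul_zero, mul_one, sub_zero, add_zero] at hc
  have key : tstar =
        (N * ((K : ℝ) - 1) ^ 2 / (2 * K)) * Real.exp (-μ 0) -
          N * ((K : ℝ) - 1) ^ 2 / (2 * K) +
          (N / (2 * K)) * (1 - Real.exp (μ 0)) -
          (N * ((K : ℝ) - 1) / K) * μ 0 := by
    field_simp at hc ⊢
    linarith
  refine ⟨key, ?_⟩
  have h1 : 0 ≤ (N / (2 * K)) * (1 - Real.exp (μ 0)) := by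
    have : Real.exp (μ 0) ≤ 1 := Real.exp_le_one_iff.mpr hμ0.le
    exact mul_nonneg (by positivity) (by linarith)
  have h2 : (N * ((K : ℝ) - 1) / K) * μ 0 ≤ 0 :=
    mul_nonpos_of_nonneg_of_nonpos (by positivity) hμ0.le
  linarith
end

section
/- Let K ≥ 2 be an integer, N > 0 a real number, and let μ : [0,∞) → ℝ be differentiable and satisfy the differential equation μ'(t) = K / ( N·( exp(μ(t)) + (K−1) ) ) for all t ≥ 0. Then for all t ≥ 0: (K/N)·t + (K−1)·μ(0) + exp(μ(0)) = (K−1)·μ(t) + exp(μ(t)). -/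
/-- implicit solution of the reduced gradient-flow dynamics of the logit gap
under supervised finetuning (cross-entropy) of a linear softmax model. -/
theorem sft_gap_dynamics_implicit_solution
    (K : ℕ) (hK : 2 ≤ K) (N : ℝ) (hN : 0 < N) (μ : ℝ → ℝ)
    (hode : ∀ t : ℝ, 0 ≤ t →
      HasDerivAt μ ((K : ℝ) / (N * (Real.exp (μ t) + ((K : ℝ) - 1)))) t)
    (t : ℝ) (ht : 0 ≤ t) :
    ((K : ℝ) / N) * t + ((K : ℝ) - 1) * μ 0 + Real.exp (μ 0) =
      ((K : ℝ) - 1) * μ t + Real.exp (μ t) := by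
  have hK' : (2 : ℝ) ≤ (K : ℝ) := by exact_mod_cast hK
  have hd : ∀ x : ℝ, 0 ≤ x → HasDerivAt
      (fun s => ((K : ℝ) - 1) * μ s + Real.exp (μ s) - ((K : ℝ) / N) * s) 0 x := by
    intro x hx
    have h := hode x hx
    have hpos : 0 < Real.exp (μ x) + ((K : ℝ) - 1) := by
      have := Real.exp_pos (μ x)
      linarith
    have h2 := ((h.const_mul ((K : ℝ) - 1)).add h.exp).sub
      ((hasDerivAt_id x).const_mul ((K : ℝ) / N))
    refine h2.congr_deriv ?_
    have h3 := hpos.ne'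
    have h4 := hN.ne'
    rw [← add_mul, mul_one, add_comm ((K : ℝ) - 1)]
    field_simp
    ring
  have hc := constant_of_has_deriv_right_zero (a := 0) (b := t)
    (fun x hx => (hd x hx.1).continuousAt.continuousWithinAt)
    (fun x hx => (hd x hx.1).hasDerivWithinAt) t ⟨ht, le_refl t⟩
  simp only [mul_zero] at hc
  linarith
end

section
/- Let K ≥ 2 be an integer, N > 0 a real number, and let μ : [0,∞) → ℝ be differentiable and satisfy μ'(t) = K / ( N·( exp(μ(t)) + (K−1) ) ) for all t ≥ 0, with μ(0) < 0. If t* ≥ 0 satisfies μ(t*) = 0, then t* = (N/K)·( 1 − (K−1)·μ(0) − exp(μ(0)) ), and in particular t* < N/K − (N(K−1)/K)·μ(0). -/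
/-- exact formula and logarithmic upper bound for the first time at which
the logit gap crosses zero under the reduced supervised finetuning gradient-flow dynamics. -/
theorem sft_time_to_correct_classification
    (K : ℕ) (hK : 2 ≤ K) (N : ℝ) (hN : 0 < N) (μ : ℝ → ℝ)
    (hode : ∀ t : ℝ, 0 ≤ t →
      HasDerivAt μ ((K : ℝ) / (N * (Real.exp (μ t) + ((K : ℝ) - 1)))) t)
    (hμ0 : μ 0 < 0)
    (tstar : ℝ) (htstar : 0 ≤ tstar) (hzero : μ tstar = 0) :
    tstar = (N / K) * (1 - ((K : ℝ) - 1) * μ 0 - Real.exp (μ 0)) ∧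
      tstar < N / K - (N * ((K : ℝ) - 1) / K) * μ 0 := by
  have hK2 : (2 : ℝ) ≤ (K : ℝ) := by exact_mod_cast hK
  have hK0 : (K : ℝ) ≠ 0 := by linarith
  have hder : ∀ t : ℝ, 0 ≤ t →
      HasDerivAt (fun t => Real.exp (μ t) + ((K : ℝ) - 1) * μ t - (K : ℝ) / N * t) 0 t := by
    intro t ht
    have h := hode t ht
    have h2 := (h.exp.add (h.const_mul ((K : ℝ) - 1))).sub
      ((hasDerivAt_id t).const_mul ((K : ℝ) / N))
    have hpos : Real.exp (μ t) + ((K : ℝ) - 1) ≠ 0 := by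
      have := Real.exp_pos (μ t)
      linarith
    refine h2.congr_deriv ?_
    field_simp
    ring
  have hconst := constant_of_has_deriv_right_zero
    (fun t ht => (hder t ht.1).continuousAt.continuousWithinAt)
    (fun t ht => (hder t ht.1).hasDerivWithinAt) tstar (Set.right_mem_Icc.mpr htstar)
  simp only [hzero, Real.exp_zero, mul_zero, add_zero, sub_zero] at hconst
  have hmain : tstar = (N / K) * (1 - ((K : ℝ) - 1) * μ 0 - Real.exp (μ 0)) := by
    have h3 : 1 - ((K : ℝ) - 1) * μ 0 - Real.exp (μ 0) = (K : ℝ) / N * tstar := by linarith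
    rw [h3]
    field_simp
  refine ⟨hmain, ?_⟩
  have hp : 0 < N / K * Real.exp (μ 0) := by positivity
  have h4 : (N / K) * (1 - ((K : ℝ) - 1) * μ 0 - Real.exp (μ 0))
      = N / K - (N * ((K : ℝ) - 1) / K) * μ 0 - N / K * Real.exp (μ 0) := by ring
  linarith
end

section
/- Let K ≥ 2 be an integer, N > 0 a real number, and let μ : [0,∞) → ℝ be differentiable and satisfy μ'(t) = 2K / ( N·( exp(μ(t)) + 2(K−1) + (K−1)²·exp(−μ(t)) ) ) for all t ≥ 0, with μ(0) < 0. Define the initial reward standard deviation σ := sqrt( 4(K−1) / ( exp(μ(0)) + 2(K−1) + (K−1)²·exp(−μ(0)) ) ). If t* ≥ 0 satisfies μ(t*) = 0, then t* ≥ (2N(K−1)/K)·( 1/σ² − 1 − (K−1)/4 ); in particular, the time until correct classification under reinforcement finetuning grows at least inverse-quadratically in σ. -/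
/-- under the reduced reinforcement finetuning gradient-flow dynamics, the
time until correct classification is lower bounded inverse-quadratically in the initial reward
standard deviation `σ`. -/
theorem rft_time_lower_bound_in_reward_std
    (K : ℕ) (hK : 2 ≤ K) (N : ℝ) (hN : 0 < N) (μ : ℝ → ℝ)
    (hode : ∀ t : ℝ, 0 ≤ t →
      HasDerivAt μ
        (2 * (K : ℝ) / (N * (Real.exp (μ t) + 2 * ((K : ℝ) - 1) +
          ((K : ℝ) - 1) ^ 2 * Real.exp (-μ t)))) t)
    (hμ0 : μ 0 < 0)
    (σ : ℝ)
    (hσ : σ = Real.sqrt (4 * ((K : ℝ) - 1) /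
      (Real.exp (μ 0) + 2 * ((K : ℝ) - 1) + ((K : ℝ) - 1) ^ 2 * Real.exp (-μ 0))))
    (tstar : ℝ) (htstar : 0 ≤ tstar) (hzero : μ tstar = 0) :
    tstar ≥ (2 * N * ((K : ℝ) - 1) / K) * (1 / σ ^ 2 - 1 - ((K : ℝ) - 1) / 4) := by
  have hK2 : (2:ℝ) ≤ K := by exact_mod_cast hK
  obtain ⟨c, hc⟩ : ∃ c : ℝ, c = (K:ℝ) - 1 := ⟨_, rfl⟩
  have hKc : (K:ℝ) = c + 1 := by linarith
  have hc1 : 1 ≤ c := by linarith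
  rw [← hc] at hσ ⊢
  simp only [← hc] at hode
  rw [hKc] at hode ⊢
  have hG : ∀ t : ℝ, 0 ≤ t → HasDerivAt (fun t => Real.exp (μ t) + 2 * c * μ t
      - c ^ 2 * Real.exp (-μ t) - 2 * (c + 1) / N * t) 0 t := by
    intro t ht
    have h := hode t ht
    have hpos : 0 < Real.exp (μ t) + 2 * c + c ^ 2 * Real.exp (-μ t) := by positivity
    have h2 := ((h.exp.add (h.const_mul (2 * c))).sub (h.neg.exp.const_mul (c ^ 2))).sub
      ((hasDerivAt_id t).const_mul (2 * (c + 1) / N))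
    refine h2.congr_deriv ?_
    simp only [Pi.neg_apply]
    field_simp
    ring
  have hconst := constant_of_has_deriv_right_zero
    (fun t ht => (hG t ht.1).continuousAt.continuousWithinAt)
    (fun t ht => (hG t ht.1).hasDerivWithinAt) tstar (Set.right_mem_Icc.2 htstar)
  simp only [hzero, Real.exp_zero, neg_zero, mul_zero, sub_zero] at hconst
  have hpos : 0 < Real.exp (μ 0) + 2 * c + c ^ 2 * Real.exp (-μ 0) := by positivity
  have hs : 1 / σ ^ 2 = (Real.exp (μ 0) + 2 * c + c ^ 2 * Real.exp (-μ 0)) / (4 * c) := by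
    rw [hσ, Real.sq_sqrt (by positivity), one_div_div]
  have he : Real.exp (μ 0) < 1 := by simpa using hμ0
  have hcm : c * μ 0 ≤ 0 := by nlinarith
  have ht : tstar = N / (2 * (c + 1)) * (2 * (c + 1) / N * tstar) := by field_simp
  rw [hs, ht, ge_iff_le]
  have hr : 2 * N * c / (c + 1) * ((Real.exp (μ 0) + 2 * c + c ^ 2 * Real.exp (-μ 0)) / (4 * c)
      - 1 - c / 4) = N / (2 * (c + 1)) *
      (Real.exp (μ 0) + 2 * c + c ^ 2 * Real.exp (-μ 0) - 4 * c - c ^ 2) := by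
    field_simp
    ring
  rw [hr]
  apply mul_le_mul_of_nonneg_left _ (by positivity)
  linarith
end

section
/- Let K ≥ 2 be an integer, N > 0 a real number, and let μ : [0,∞) → ℝ be differentiable and satisfy μ'(t) = K / ( N·( exp(μ(t)) + (K−1) ) ) for all t ≥ 0, with μ(0) < 0. Define the initial reward standard deviation σ := sqrt( 4(K−1) / ( exp(μ(0)) + 2(K−1) + (K−1)²·exp(−μ(0)) ) ). If t* ≥ 0 satisfies μ(t*) = 0, then t* < N/K + (N(K−1)/K)·ln( 4 / ((K−1)·σ²) ); in particular, the time until correct classification under supervised finetuning grows at most logarithmically in 1/σ. -/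
/-- under the reduced supervised finetuning gradient-flow dynamics, the
time until correct classification is upper bounded logarithmically in `1/σ`, where `σ` is the
initial reward standard deviation. -/
theorem sft_time_upper_bound_in_reward_std
    (K : ℕ) (hK : 2 ≤ K) (N : ℝ) (hN : 0 < N) (μ : ℝ → ℝ)
    (hode : ∀ t : ℝ, 0 ≤ t →
      HasDerivAt μ ((K : ℝ) / (N * (Real.exp (μ t) + ((K : ℝ) - 1)))) t)
    (hμ0 : μ 0 < 0)
    (σ : ℝ)
    (hσ : σ = Real.sqrt (4 * ((K : ℝ) - 1) /
      (Real.exp (μ 0) + 2 * ((K : ℝ) - 1) + ((K : ℝ) - 1) ^ 2 * Real.exp (-μ 0))))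
    (tstar : ℝ) (htstar : 0 ≤ tstar) (hzero : μ tstar = 0) :
    tstar < N / K + (N * ((K : ℝ) - 1) / K) * Real.log (4 / (((K : ℝ) - 1) * σ ^ 2)) := by
  have hk : (2 : ℝ) ≤ (K : ℝ) := by exact_mod_cast hK
  have hk0 : (0 : ℝ) < (K : ℝ) := by linarith
  have hc : (0 : ℝ) < (K : ℝ) - 1 := by linarith
  have hder : ∀ t : ℝ, 0 ≤ t → HasDerivAt
      (fun t => Real.exp (μ t) + ((K : ℝ) - 1) * μ t - (K : ℝ) / N * t) 0 t := by
    intro t ht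
    have h := hode t ht
    have h2 := (h.exp.add (h.const_mul ((K : ℝ) - 1))).sub
      ((hasDerivAt_id t).const_mul ((K : ℝ) / N))
    refine h2.congr_deriv ?_
    have : Real.exp (μ t) + ((K : ℝ) - 1) ≠ 0 := by positivity
    field_simp
    ring
  have hconst := constant_of_has_deriv_right_zero (a := 0) (b := tstar)
    (fun x hx => (hder x hx.1).continuousAt.continuousWithinAt)
    (fun x hx => (hder x hx.1).hasDerivWithinAt) tstar ⟨htstar, le_refl _⟩
  simp only [hzero, Real.exp_zero, mul_zero, sub_zero, add_zero] at hconst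
  have ht : tstar = N / K * (1 - Real.exp (μ 0) - ((K : ℝ) - 1) * μ 0) := by
    field_simp at hconst ⊢
    linarith
  have he := Real.exp_pos (μ 0)
  have he' := Real.exp_pos (-μ 0)
  have hσ2 : 4 / (((K : ℝ) - 1) * σ ^ 2) =
      (Real.exp (μ 0) + 2 * ((K : ℝ) - 1) + ((K : ℝ) - 1) ^ 2 * Real.exp (-μ 0)) /
        ((K : ℝ) - 1) ^ 2 := by
    rw [hσ, Real.sq_sqrt (by positivity)]
    field_simp
  have hlog : -μ 0 < Real.log (4 / (((K : ℝ) - 1) * σ ^ 2)) := by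
    rw [hσ2, Real.lt_log_iff_exp_lt (by positivity), lt_div_iff₀ (by positivity)]
    linarith
  have h1 : 0 < N / K := by positivity
  have h2 : ((K : ℝ) - 1) * (-μ 0) <
      ((K : ℝ) - 1) * Real.log (4 / (((K : ℝ) - 1) * σ ^ 2)) :=
    mul_lt_mul_of_pos_left hlog hc
  calc tstar = N / K * (1 - Real.exp (μ 0) - ((K : ℝ) - 1) * μ 0) := ht
    _ < N / K * (1 + ((K : ℝ) - 1) * Real.log (4 / (((K : ℝ) - 1) * σ ^ 2))) :=
        mul_lt_mul_of_pos_left (by linarith) h1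
    _ = _ := by ring
end
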